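/- The K-linear map U_q^-(g) ⊗_K K[T] ⊗_K U_q^+(g) → B_θ(g), a ⊗ t ⊗ b ↦ F(a)·ι(t)·E(b), is bijective, where: K[T] is the Laurent polynomial algebra on the set of θ-orbits in I and ι sends the variable of the orbit of i to T_i; F: U_q^-(g) → B_θ(g) is the algebra homomorphism sending f_i to F_i; and E: U_q^+(g) → B_θ(g) is the algebra homomorphism sending e_i to E_i (here U_q^+(g) is the K-algebra generated by {e_i}_{i∈I} with the q-Serre relations). In particular B_θ(g) ≅ U_q^-(g) ⊗ K[T_i^{±1}; i∈I] ⊗ U_q^+(g) as a K-vector space. -/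

import Mathlib

noncomputable section
open scoped BigOperators TensorProduct

abbrev KK : Type := RatFunc ℚ

def qq : KK := RatFunc.X

def qZ (n : ℤ) : KK := qq ^ n

def qInt (d : ℤ) (k : ℕ) : KK := (qq ^ (d * k) - qq ^ (-(d * k : ℤ))) / (qq ^ d - qq ^ (-d : ℤ))

def qFact (d : ℤ) (k : ℕ) : KK := ∏ m ∈ Finset.range k, qInt d (m + 1)

variable {I : Type} [DecidableEq I]

/-- `b = 1 - (α_i^∨, α_j)` -/
def serreN (A : I → I → ℤ) (i j : I) : ℕ := (1 - 2 * A i j / A i i).toNat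

/-- the `q`-Serre element `Σ_k (-1)^k x_i^{(k)} x_j x_i^{(b-k)}` attached to a family
`x : I → R` of elements of a `K`-algebra `R`. -/
def serreElt (A : I → I → ℤ) {R : Type} [Ring R] [Algebra KK R] (x : I → R) (i j : I) : R :=
  ∑ k ∈ Finset.range (serreN A i j + 1),
    ((-1 : KK) ^ k * (qFact (A i i / 2) k)⁻¹ * (qFact (A i i / 2) (serreN A i j - k))⁻¹) •
      (x i ^ k * x j * x i ^ (serreN A i j - k))

inductive SerreRel (A : I → I → ℤ) : FreeAlgebra KK I → FreeAlgebra KK I → Prop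
  | serre (i j : I) (h : i ≠ j) : SerreRel A (serreElt A (FreeAlgebra.ι KK) i j) 0

abbrev Um (A : I → I → ℤ) : Type := RingQuot (SerreRel A)

def fgen (A : I → I → ℤ) (i : I) : Um A := RingQuot.mkAlgHom KK (SerreRel A) (FreeAlgebra.ι KK i)

def fdiv (A : I → I → ℤ) (i : I) (n : ℕ) : Um A :=
  (qFact (A i i / 2) n)⁻¹ • (fgen A i) ^ n

def IsCartan (A : I → I → ℤ) : Prop :=
  (∀ i j, A i j = A j i) ∧ (∀ i, 0 < A i i) ∧ (∀ i, 2 ∣ A i i) ∧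
  (∀ i j, i ≠ j → A i j ≤ 0) ∧ (∀ i j, A i i ∣ 2 * A i j)

/-- `θ` is a Dynkin-diagram involution. -/
def IsTheta (A : I → I → ℤ) (θ : I → I) : Prop :=
  (∀ i, θ (θ i) = i) ∧ (∀ i j, A (θ i) (θ j) = A i j)

/-- generators of `B_θ(g)`: `E_i`, `F_i`, `T_i` and `T_i⁻¹`. -/
inductive BGen (I : Type) : Type
  | E : I → BGen I
  | F : I → BGen I
  | T : I → BGen I
  | Ti : I → BGen I

def bE (i : I) : FreeAlgebra KK (BGen I) := FreeAlgebra.ι KK (BGen.E i)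
def bF (i : I) : FreeAlgebra KK (BGen I) := FreeAlgebra.ι KK (BGen.F i)
def bT (i : I) : FreeAlgebra KK (BGen I) := FreeAlgebra.ι KK (BGen.T i)
def bTi (i : I) : FreeAlgebra KK (BGen I) := FreeAlgebra.ι KK (BGen.Ti i)

/-- the defining relations of `B_θ(g)`. -/
inductive BRel (A : I → I → ℤ) (θ : I → I) :
    FreeAlgebra KK (BGen I) → FreeAlgebra KK (BGen I) → Prop
  | T_inv_right (i : I) : BRel A θ (bT i * bTi i) 1
  | T_inv_left (i : I) : BRel A θ (bTi i * bT i) 1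
  | T_comm (i j : I) : BRel A θ (bT i * bT j) (bT j * bT i)
  | T_theta (i : I) : BRel A θ (bT (θ i)) (bT i)
  | Ti_theta (i : I) : BRel A θ (bTi (θ i)) (bTi i)
  | TE (i j : I) : BRel A θ (bT i * bE j) (qZ (A i j + A (θ i) j) • (bE j * bT i))
  | TF (i j : I) : BRel A θ (bT i * bF j) (qZ (-(A i j + A (θ i) j)) • (bF j * bT i))
  | EF (i j : I) : BRel A θ (bE i * bF j)
      (qZ (-(A i j)) • (bF j * bE i) + (if i = j then 1 else 0) +
        (if θ i = j then bT i else 0))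
  | Eserre (i j : I) (h : i ≠ j) : BRel A θ (serreElt A bE i j) 0
  | Fserre (i j : I) (h : i ≠ j) : BRel A θ (serreElt A bF i j) 0

abbrev Bth (A : I → I → ℤ) (θ : I → I) : Type := RingQuot (BRel A θ)

def Eg (A : I → I → ℤ) (θ : I → I) (i : I) : Bth A θ :=
  RingQuot.mkAlgHom KK (BRel A θ) (bE i)
def Fg (A : I → I → ℤ) (θ : I → I) (i : I) : Bth A θ :=
  RingQuot.mkAlgHom KK (BRel A θ) (bF i)
def Tg (A : I → I → ℤ) (θ : I → I) (i : I) : Bth A θ :=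
  RingQuot.mkAlgHom KK (BRel A θ) (bT i)
def Tig (A : I → I → ℤ) (θ : I → I) (i : I) : Bth A θ :=
  RingQuot.mkAlgHom KK (BRel A θ) (bTi i)

/-- a dominant integral `θ`-invariant weight `λ`, recorded through the pairings
`lam i = (α_i, λ)`. -/
def IsDomWt (A : I → I → ℤ) (θ : I → I) (lam : I → ℤ) : Prop :=
  (∀ i, 0 ≤ lam i) ∧ (∀ i, A i i ∣ 2 * lam i) ∧ (∀ i, lam (θ i) = lam i)

/-- the set of `θ`-orbits in `I`. -/
abbrev Orb (θ : I → I) : Type := Quot (fun i j : I => θ i = j)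

/-!
Moving the `F_i` to the left and the `E_i` to the right shows that the products `F(a) ι(t) E(b)`
span `B_θ(g)`. For their linear independence we let `B_θ(g)` act on
`U_q^-(g) ⊗ (K[T] ⊗ U_q^+(g))`: here `F_i` acts by left multiplication on `U_q^-(g)`, while `T_i`
and `E_i` act as on a module induced from the left regular module `K[T] ⊗ U_q^+(g)`,
`E_k (a ⊗ v) = σ_k(a) ⊗ E_k v + D_k^-(a) ⊗ v + T_k (D_{θ(k)}^+(a) ⊗ v)`,
with Kashiwara's skew derivations `D_k^±` of `U_q^-(g)`. Applied to the vacuum vector `1 ⊗ 1`,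
`F(a) ι(t) E(b)` gives back `a ⊗ t ⊗ b`.

The `q`-Serre relations hold for these `E_k` because both `D_k^±` kill the `q`-Serre elements: such
an element is a multiple of an iterated `q`-commutator, on which a skew derivation can be computed
one step at a time. Hence the `q`-Serre element in the `E_k` commutes with every `F_j` up to a
scalar, and it vanishes on `1 ⊗ (K[T] ⊗ U_q^+(g))`, which generates the module under the `F_j`.
-/

section QuantumIntegers

lemma qq_ne_zero : qq ≠ 0 := RatFunc.X_ne_zero

lemma intDegree_qq_pow (n : ℕ) : (qq ^ n).intDegree = n := by
  induction n with
  | zero => simp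
  | succ n ih =>
    rw [pow_succ, RatFunc.intDegree_mul (pow_ne_zero n qq_ne_zero) qq_ne_zero, ih, qq,
      RatFunc.intDegree_X, Nat.cast_succ]

lemma intDegree_qZ (n : ℤ) : (qZ n).intDegree = n := by
  obtain ⟨m, rfl | rfl⟩ := n.eq_nat_or_neg <;>
    simp [qZ, intDegree_qq_pow]

lemma qZ_injective : Function.Injective qZ :=
  Function.LeftInverse.injective intDegree_qZ

@[simp] lemma qZ_zero : qZ 0 = 1 := zpow_zero qq

lemma qZ_add (m n : ℤ) : qZ (m + n) = qZ m * qZ n := zpow_add₀ qq_ne_zero m n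

lemma qZ_pow (n : ℤ) (k : ℕ) : qZ n ^ k = qZ (n * k) := by
  rw [qZ, qZ, zpow_mul, zpow_natCast]

lemma qZ_mul_qZ_neg (n : ℤ) : qZ n * qZ (-n) = 1 := by
  rw [← qZ_add, add_neg_cancel, qZ_zero]

lemma qZ_neg_mul_qZ (n : ℤ) : qZ (-n) * qZ n = 1 := by
  rw [mul_comm, qZ_mul_qZ_neg]

lemma qZ_sub_qZ_neg_ne_zero {n : ℤ} (hn : n ≠ 0) : qZ n - qZ (-n) ≠ 0 :=
  sub_ne_zero.2 fun h => hn (by have := qZ_injective h; omega)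

lemma qInt_eq (e : ℤ) (k : ℕ) : qInt e k = (qZ (e * k) - qZ (-(e * k))) / (qZ e - qZ (-e)) := rfl

@[simp] lemma qInt_zero (e : ℤ) : qInt e 0 = 0 := by simp [qInt]

lemma qInt_neg (e : ℤ) (k : ℕ) : qInt (-e) k = qInt e k := by
  rw [qInt_eq, qInt_eq, neg_mul, neg_neg, neg_neg, ← neg_sub (qZ (e * k)), ← neg_sub (qZ e),
    neg_div_neg_eq]

lemma qInt_succ_ne_zero {e : ℤ} (he : e ≠ 0) (k : ℕ) : qInt e (k + 1) ≠ 0 :=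
  div_ne_zero (qZ_sub_qZ_neg_ne_zero (mul_ne_zero he (by positivity))) (qZ_sub_qZ_neg_ne_zero he)

lemma qInt_add (e : ℤ) (k l : ℕ) :
    qInt e (k + l) = qZ (e * l) * qInt e k + qZ (-(e * k)) * qInt e l := by
  simp only [qInt_eq, ← mul_div_assoc, ← add_div, mul_sub, ← qZ_add]
  congr 1
  push_cast
  ring_nf

lemma qFact_succ (e : ℤ) (k : ℕ) : qFact e (k + 1) = qFact e k * qInt e (k + 1) :=
  Finset.prod_range_succ _ k

lemma qFact_neg (e : ℤ) (k : ℕ) : qFact (-e) k = qFact e k :=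
  Finset.prod_congr rfl fun _ _ => qInt_neg e _

lemma qFact_units_mul (ε : ℤˣ) (e : ℤ) (k : ℕ) : qFact (ε * e) k = qFact e k := by
  rcases Int.units_eq_one_or ε with rfl | rfl <;> simp [qFact_neg]

lemma qFact_ne_zero {e : ℤ} (he : e ≠ 0) (k : ℕ) : qFact e k ≠ 0 :=
  Finset.prod_ne_zero_iff.2 fun m _ => qInt_succ_ne_zero he m

lemma qInt_mul_inv_qFact {e : ℤ} (he : e ≠ 0) (k : ℕ) :
    qInt e (k + 1) * (qFact e (k + 1))⁻¹ = (qFact e k)⁻¹ := by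
  rw [qFact_succ, mul_inv, mul_left_comm, mul_inv_cancel₀ (qInt_succ_ne_zero he k), mul_one]

end QuantumIntegers

section QBracket

variable {k R S : Type*} [CommRing k] [Ring R] [Algebra k R] [Ring S] [Algebra k S]

/-- The iterated twisted commutator of `x` with `y`: each step replaces `u` by
`u x - z p^m x u`. For `p = q_i^2` and `z = q^{(α_i, α_j)}` it is a multiple of a partial
`q`-Serre sum. -/
def qBracket (z p : k) (x y : R) : ℕ → R
  | 0 => y
  | m + 1 => qBracket z p x y m * x - (z * p ^ m) • (x * qBracket z p x y m)

lemma qBracket_zero (z p : k) (x y : R) : qBracket z p x y 0 = y := rfl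

lemma qBracket_succ (z p : k) (x y : R) (m : ℕ) :
    qBracket z p x y (m + 1) =
      qBracket z p x y m * x - (z * p ^ m) • (x * qBracket z p x y m) := rfl

lemma map_qBracket (f : R →ₐ[k] S) (z p : k) (x y : R) (m : ℕ) :
    f (qBracket z p x y m) = qBracket z p (f x) (f y) m := by
  induction m with
  | zero => rfl
  | succ m ih => simp only [qBracket_succ, map_sub, map_mul, map_smul, ih]

lemma qBracket_smul_smul (z p a b : k) (x y : R) (m : ℕ) :
    qBracket z p (a • x) (b • y) m = (a ^ m * b) • qBracket z p x y m := by
  induction m with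
  | zero => simp [qBracket_zero]
  | succ m ih =>
    simp only [qBracket_succ, ih, smul_mul_smul_comm, smul_sub, smul_smul]
    congr 2 <;> ring

end QBracket

section SerreSum

open Finset.HasAntidiagonal (antidiagonal mem_antidiagonal)

variable {R : Type} [Ring R] [Algebra KK R]

/-- The Gaussian binomial coefficient `[k+l]! / ([k]! [l]!)`, indexed by the two parts. -/
def qBinom (e : ℤ) (k l : ℕ) : KK := qFact e (k + l) * (qFact e k)⁻¹ * (qFact e l)⁻¹

-- Leaving `[k] / [k]!` and `[l] / [l]!` uncancelled makes Pascal's rule valid at `k = 0`, `l = 0`.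
lemma qBinom_pascal (e : ℤ) {k l m : ℕ} (h : k + l = m + 1) :
    qBinom e k l =
      qZ (e * l) * (qFact e m * (qInt e k * (qFact e k)⁻¹) * (qFact e l)⁻¹) +
        qZ (-(e * k)) * (qFact e m * (qFact e k)⁻¹ * (qInt e l * (qFact e l)⁻¹)) := by
  rw [qBinom, h, qFact_succ, ← h, qInt_add]
  ring

lemma smul_eq_add_of_pascal {M : Type*} [AddCommGroup M] [Module KK M] (e : ℤ) (z : KK)
    {k l m : ℕ} (h : k + l = m + 1) (u : M) :
    ((-z) ^ k * qZ (e * k * ((m + 1 : ℕ) - 1)) * qBinom e k l) • u =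
      ((-z) ^ k * qZ (e * k * m + e * l) *
          (qFact e m * (qInt e k * (qFact e k)⁻¹) * (qFact e l)⁻¹)) • u +
        ((-z) ^ k * qZ (e * k * (m - 1)) *
          (qFact e m * (qFact e k)⁻¹ * (qInt e l * (qFact e l)⁻¹))) • u := by
  rw [qBinom_pascal e h, ← add_smul]
  congr 1
  rw [show e * k * ((m : ℤ) - 1) = e * k * m + -(e * k) by ring,
    show e * k * (((m + 1 : ℕ) : ℤ) - 1) = e * k * m by push_cast; ring, qZ_add, qZ_add]
  ring

lemma qBracket_eq_sum {e : ℤ} (he : e ≠ 0) (z : KK) (x y : R) (m : ℕ) :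
    qBracket z (qZ (2 * e)) x y m =
      ∑ kl ∈ antidiagonal m,
        ((-z) ^ kl.1 * qZ (e * kl.1 * (m - 1)) * qBinom e kl.1 kl.2) •
          (x ^ kl.1 * y * x ^ kl.2) := by
  induction m with
  | zero => simp [qBracket_zero, qBinom, qFact]
  | succ m ih =>
    rw [Finset.sum_congr rfl fun kl hkl => smul_eq_add_of_pascal e z (mem_antidiagonal.1 hkl) _,
      Finset.sum_add_distrib, Finset.Nat.sum_antidiagonal_succ,
      Finset.Nat.sum_antidiagonal_succ' (f := fun kl => ((-z) ^ kl.1 * _ * _) • _),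
      qBracket_succ, ih, Finset.sum_mul, Finset.mul_sum, Finset.smul_sum, sub_eq_add_neg,
      ← Finset.sum_neg_distrib, add_comm (∑ _ ∈ _, _)]
    simp only [qInt_zero, zero_mul, mul_zero, zero_smul, zero_add, qInt_mul_inv_qFact he]
    congr 1
    · refine Finset.sum_congr rfl fun ⟨k, l⟩ hkl => ?_
      obtain rfl := mem_antidiagonal.1 hkl
      rw [mul_smul_comm, smul_smul, ← neg_smul, pow_succ' x, qZ_pow]
      simp only [mul_assoc]
      congr 1
      rw [show e * ((k + 1 : ℕ) * (k + l : ℕ)) + e * l =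
        2 * (e * (k + l : ℕ)) + e * (k * ((k + l : ℕ) - 1)) by push_cast; ring, qZ_add, qBinom]
      ring
    · refine Finset.sum_congr rfl fun ⟨k, l⟩ hkl => ?_
      obtain rfl := mem_antidiagonal.1 hkl
      rw [smul_mul_assoc, pow_succ x, qBinom]
      simp only [mul_assoc]

omit [DecidableEq I]

variable {A : I → I → ℤ} {i j : I}

lemma IsCartan.symm (hA : IsCartan A) (i j : I) : A i j = A j i := hA.1 i j

lemma IsCartan.exists_root_data (hA : IsCartan A) (hij : i ≠ j) :
    ∃ (d : ℤ) (n : ℕ), d ≠ 0 ∧ A i i = 2 * d ∧ A i j = -(d * n) ∧ serreN A i j = n + 1 := by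
  obtain ⟨-, hpos, heven, hnonpos, hdvd⟩ := hA
  obtain ⟨d, hd⟩ := heven i
  obtain ⟨a, ha⟩ := hdvd i j
  have hd_pos : 0 < d := by linarith [hpos i]
  have haij : A i j = d * a := by rw [hd] at ha; linarith
  have ha_nonpos : a ≤ 0 := nonpos_of_mul_nonpos_right (haij ▸ hnonpos i j hij) hd_pos
  obtain ⟨n, hn⟩ := Int.eq_ofNat_of_zero_le (neg_nonneg.2 ha_nonpos)
  obtain rfl : a = -n := by omega
  refine ⟨d, n, hd_pos.ne', hd, by rw [haij, mul_neg], ?_⟩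
  rw [serreN, ha, Int.mul_ediv_cancel_left _ (hpos i).ne']
  omega

lemma qFact_smul_serreElt (hA : IsCartan A) (hij : i ≠ j) (ε : ℤˣ) (x : I → R) :
    qFact (A i i / 2) (serreN A i j) • serreElt A x i j =
      qBracket (qZ (ε * A i j)) (qZ (ε * A i i)) (x i) (x j) (serreN A i j) := by
  obtain ⟨d, n, hd, hii, hij', hN⟩ := hA.exists_root_data hij
  have hεd : (ε : ℤ) * d ≠ 0 := mul_ne_zero ε.ne_zero hd
  rw [serreElt, hii, Int.mul_ediv_cancel_left _ two_ne_zero, mul_left_comm, qBracket_eq_sum hεd,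
    Finset.Nat.sum_antidiagonal_eq_sum_range_succ_mk, Finset.smul_sum, hN]
  refine Finset.sum_congr rfl fun k hk => ?_
  have hkn : k + (n + 1 - k) = n + 1 := by have := Finset.mem_range.1 hk; omega
  have hq : qZ (ε * A i j) ^ k * qZ (ε * d * k * ((n + 1 : ℕ) - 1)) = 1 := by
    rw [qZ_pow, ← qZ_add, hij', ← qZ_zero]
    push_cast
    ring_nf
  rw [smul_smul, qBinom, hkn]
  simp only [qFact_units_mul]
  congr 1
  rw [neg_pow (qZ _), mul_assoc _ (_ ^ k) (qZ _), hq]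
  ring

end SerreSum

section SkewDerivation

variable {k R S : Type*} [CommRing k] [Ring R] [Algebra k R] [Ring S] [Algebra k S]

/-- A linear map satisfying the Leibniz rule twisted by `α` on the left and `β` on the right.
Kashiwara's operators `e_i'` and `e_i^*` on `U_q^-(g)` are of this kind. -/
def IsSkewDerivation (α β : S →ₐ[k] R) (D : S →ₗ[k] R) : Prop :=
  ∀ a b, D (a * b) = α a * D b + D a * β b

namespace IsSkewDerivation

variable {α β : S →ₐ[k] R} {D : S →ₗ[k] R} {x y : S} {z p : k}

lemma map_qBracket_eq_zero (hD : IsSkewDerivation α β D) (hx : D x = 0) (hy : D y = 0) (m : ℕ) :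
    D (qBracket z p x y m) = 0 := by
  induction m with
  | zero => exact hy
  | succ m ih => simp [qBracket_succ, hD _ _, hx, ih]

lemma map_qBracket_eq_zero_of_left_eq_one (hD : IsSkewDerivation α β D) (hx : D x = 1)
    (hy : D y = 0) (hαx : α x = p • β x) (hαy : α y = z • β y) (m : ℕ) :
    D (qBracket z p x y m) = 0 := by
  induction m with
  | zero => exact hy
  | succ m ih =>
    have hα : α (qBracket z p x y m) = (z * p ^ m) • β (qBracket z p x y m) := by
      rw [map_qBracket, map_qBracket, hαx, hαy, qBracket_smul_smul, mul_comm]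
    rw [qBracket_succ, map_sub, map_smul, hD, hD, hx, ih, hα]
    simp

lemma map_qBracket_of_right_eq_one (hD : IsSkewDerivation α β D) (hx : D x = 0) (hy : D y = 1)
    (hαx : α x = z • β x) (m : ℕ) :
    D (qBracket z p x y m) = (∏ j ∈ Finset.range m, (1 - z * p ^ j * z)) • β x ^ m := by
  induction m with
  | zero => simpa [qBracket_zero] using hy
  | succ m ih =>
    rw [qBracket_succ, map_sub, map_smul, hD, hD, hx, ih, hαx, Finset.prod_range_succ, mul_zero,
      zero_mul, zero_add, add_zero, smul_mul_smul_comm, smul_mul_assoc, ← pow_succ, ← pow_succ',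
      smul_smul, ← sub_smul]
    congr 1
    ring

end IsSkewDerivation

end SkewDerivation

section SerreElement

omit [DecidableEq I]

variable (A : I → I → ℤ) {R S : Type} [Ring R] [Algebra KK R] [Ring S] [Algebra KK S]

lemma map_serreElt (f : R →ₐ[KK] S) (x : I → R) (i j : I) :
    f (serreElt A x i j) = serreElt A (fun l => f (x l)) i j := by
  simp only [serreElt, map_sum, map_smul, map_mul, map_pow]

lemma serreElt_smul (c : I → KK) (x : I → R) (i j : I) :
    serreElt A (fun l => c l • x l) i j =
      (c i ^ serreN A i j * c j) • serreElt A x i j := by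
  rw [serreElt, serreElt, Finset.smul_sum]
  refine Finset.sum_congr rfl fun k hk => ?_
  have hc : c i ^ k * c i ^ (serreN A i j - k) = c i ^ serreN A i j := by
    rw [← pow_add, Nat.add_sub_cancel' (Finset.mem_range_succ_iff.1 hk)]
  simp only [smul_pow, smul_mul_smul_comm, smul_smul, ← hc]
  congr 1
  ring

variable {A}

theorem IsSkewDerivation.map_serreElt_eq_zero [DecidableEq I] (hA : IsCartan A) {α β : S →ₐ[KK] R}
    {D : S →ₗ[KK] R} (hD : IsSkewDerivation α β D) (ε : ℤˣ) (k : I) {x : I → S}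
    (hα : ∀ l, α (x l) = qZ (ε * A k l) • β (x l)) (hDx : ∀ l, D (x l) = if k = l then 1 else 0)
    {i j : I} (hij : i ≠ j) : D (serreElt A x i j) = 0 := by
  obtain ⟨d, n, hd, hii, hij', hN⟩ := hA.exists_root_data hij
  have hfact : qFact (A i i / 2) (serreN A i j) ≠ 0 := by
    rw [hii, Int.mul_ediv_cancel_left _ two_ne_zero]
    exact qFact_ne_zero hd _
  suffices D (qBracket (qZ (ε * A i j)) (qZ (ε * A i i)) (x i) (x j) (serreN A i j)) = 0 by
    rwa [← qFact_smul_serreElt hA hij, map_smul, smul_eq_zero_iff_right hfact] at this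
  by_cases hki : k = i
  · subst hki
    exact hD.map_qBracket_eq_zero_of_left_eq_one (by simp [hDx]) (by simp [hDx, hij]) (hα _)
      (hα _) _
  by_cases hkj : k = j
  · subst hkj
    have hlast : 1 - qZ (ε * A i k) * qZ (ε * A i i) ^ n * qZ (ε * A i k) = 0 := by
      rw [sub_eq_zero, qZ_pow, ← qZ_add, ← qZ_add, hii, hij', ← qZ_zero]
      ring_nf
    rw [hD.map_qBracket_of_right_eq_one (by simp [hDx, hki]) (by simp [hDx])
      (by rw [hα, hA.symm k i]), hN, Finset.prod_range_succ, hlast, mul_zero, zero_smul]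
  · exact hD.map_qBracket_eq_zero (by simp [hDx, hki]) (by simp [hDx, hkj]) _

end SerreElement

section FreeSkewDerivation

variable {k R X : Type*} [CommRing k] [Ring R] [Algebra k R] (a b v : X → R)

/-- The homomorphism into upper triangular `2 × 2` matrices whose upper right entry is
`freeSkewDeriv a b v`. -/
def freeSkewHom : FreeAlgebra k X →ₐ[k] Matrix (Fin 2) (Fin 2) R :=
  FreeAlgebra.lift k fun l => !![a l, v l; 0, b l]

/-- The linear map on the free algebra which sends the generators to `v` and satisfies the Leibniz
rule twisted by the homomorphisms extending `a` and `b`. -/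
def freeSkewDeriv : FreeAlgebra k X →ₗ[k] R :=
  Matrix.entryLinearMap k R 0 1 ∘ₗ (freeSkewHom a b v).toLinearMap

lemma freeSkewHom_eq (w : FreeAlgebra k X) :
    freeSkewHom a b v w =
      !![FreeAlgebra.lift k a w, freeSkewDeriv a b v w; 0, FreeAlgebra.lift k b w] := by
  suffices h : freeSkewHom a b v w 0 0 = FreeAlgebra.lift k a w ∧ freeSkewHom a b v w 1 0 = 0 ∧
      freeSkewHom a b v w 1 1 = FreeAlgebra.lift k b w by
    obtain ⟨h00, h10, h11⟩ := h
    ext r s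
    fin_cases r <;> fin_cases s <;> first | assumption | rfl
  induction w using FreeAlgebra.induction with
  | grade0 c => simp [Matrix.algebraMap_matrix_apply]
  | grade1 l => simp [freeSkewHom]
  | mul u w hu hw => simp [Matrix.mul_apply, Fin.sum_univ_two, hu, hw]
  | add u w hu hw => simp [hu, hw]

lemma freeSkewDeriv_ι (l : X) : freeSkewDeriv a b v (FreeAlgebra.ι k l) = v l := by
  simp [freeSkewDeriv, freeSkewHom]

lemma isSkewDerivation_freeSkewDeriv :
    IsSkewDerivation (FreeAlgebra.lift k a) (FreeAlgebra.lift k b) (freeSkewDeriv a b v) := by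
  intro u w
  have h := congr_fun₂ (map_mul (freeSkewHom a b v) u w) 0 1
  simpa [freeSkewHom_eq, Matrix.mul_apply, Fin.sum_univ_two] using h

variable {a b v} in
lemma freeAlgebra_lift_mul_eq {a' v' : X → R} {F T : R}
    (hF : ∀ l, a l * F = F * b l + v l + T * v' l) (hT : ∀ l, a l * T = T * a' l)
    (w : FreeAlgebra k X) :
    FreeAlgebra.lift k a w * F =
      F * FreeAlgebra.lift k b w + freeSkewDeriv a b v w + T * freeSkewDeriv a' b v' w := by
  have hTw (w : FreeAlgebra k X) : FreeAlgebra.lift k a w * T = T * FreeAlgebra.lift k a' w := by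
    induction w using FreeAlgebra.induction with
    | grade0 c => simp [Algebra.commutes]
    | grade1 l => simpa using hT l
    | mul u w hu hw => rw [map_mul, map_mul, mul_assoc, hw, ← mul_assoc, hu, mul_assoc]
    | add u w hu hw => rw [map_add, map_add, add_mul, mul_add, hu, hw]
  have hone (a b v : X → R) : freeSkewDeriv a b v (1 : FreeAlgebra k X) = 0 := by
    simp [freeSkewDeriv]
  induction w using FreeAlgebra.induction with
  | grade0 c => simp [Algebra.algebraMap_eq_smul_one, hone]
  | grade1 l => simpa [freeSkewDeriv_ι] using hF l
  | mul u w hu hw =>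
    rw [isSkewDerivation_freeSkewDeriv, isSkewDerivation_freeSkewDeriv, map_mul, map_mul, mul_assoc,
      hw, mul_add, mul_add, ← mul_assoc, hu, ← mul_assoc, hTw]
    noncomm_ring
  | add u w hu hw => rw [map_add, map_add, map_add, map_add, add_mul, hu, hw]; noncomm_ring

end FreeSkewDerivation

section CartanSkewDerivation

variable {A : I → I → ℤ} {R : Type} [Ring R] [Algebra KK R]

lemma freeSkewDeriv_serreElt (hA : IsCartan A) (ε : ℤˣ) (k : I) {a b : I → R}
    (hab : ∀ l, a l = qZ (ε * A k l) • b l) {i j : I} (hij : i ≠ j) :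
    freeSkewDeriv a b (fun l => if k = l then 1 else 0) (serreElt A (FreeAlgebra.ι KK) i j) = 0 :=
  (isSkewDerivation_freeSkewDeriv a b _).map_serreElt_eq_zero hA ε k
    (by simpa using hab) (freeSkewDeriv_ι a b _) hij

omit [DecidableEq I] in
lemma lift_serreElt (A : I → I → ℤ) (x : I → R) (i j : I) :
    FreeAlgebra.lift KK x (serreElt A (FreeAlgebra.ι KK) i j) = serreElt A x i j := by
  simp only [map_serreElt, FreeAlgebra.lift_ι_apply]

/-- The two error terms are skew derivations applied to the `q`-Serre element, so they vanish. -/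
lemma serreElt_mul_eq (hA : IsCartan A) (θ : I → I) (k : I) {x : I → R} {F T : R}
    (hT : ∀ l, x l * T = qZ (-(A k l + A (θ k) l)) • (T * x l))
    (hF : ∀ l, x l * F = qZ (-A k l) • (F * x l) + (if k = l then 1 else 0) +
      if θ k = l then T else 0)
    {i j : I} (hij : i ≠ j) :
    ∃ c : KK, serreElt A x i j * F = c • (F * serreElt A x i j) := by
  have h := freeAlgebra_lift_mul_eq (a := x) (b := fun l => qZ (-A k l) • x l)
    (a' := fun l => qZ (-(A k l + A (θ k) l)) • x l)
    (v := fun l => if k = l then 1 else 0) (v' := fun l => if θ k = l then 1 else 0)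
    (F := F) (T := T) (by simpa using hF) (by simpa using hT)
    (serreElt A (FreeAlgebra.ι KK) i j)
  rw [freeSkewDeriv_serreElt hA 1 k (by simp [smul_smul, qZ_mul_qZ_neg]) hij,
    freeSkewDeriv_serreElt hA (-1) (θ k) (by simp [smul_smul, ← qZ_add]) hij,
    mul_zero, add_zero, add_zero, lift_serreElt, lift_serreElt, serreElt_smul] at h
  exact ⟨_, h.trans (mul_smul_comm _ _ _)⟩

end CartanSkewDerivation

lemma freeAlgebra_ringQuot_induction {k X : Type*} [CommRing k]
    {r : FreeAlgebra k X → FreeAlgebra k X → Prop} {P : RingQuot r → Prop} (one : P 1)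
    (add : ∀ a b, P a → P b → P (a + b)) (smul : ∀ (c : k) a, P a → P (c • a))
    (ι_mul : ∀ x a, P a → P (RingQuot.mkAlgHom k r (FreeAlgebra.ι k x) * a)) (a : RingQuot r) :
    P a := by
  have mul_mem (w : FreeAlgebra k X) : ∀ a, P a → P (RingQuot.mkAlgHom k r w * a) := by
    induction w using FreeAlgebra.induction with
    | grade0 c => intro a ha; rw [AlgHom.commutes, ← Algebra.smul_def]; exact smul c a ha
    | grade1 x => exact ι_mul x
    | mul u w hu hw => intro a ha; rw [map_mul, mul_assoc]; exact hu _ (hw a ha)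
    | add u w hu hw => intro a ha; rw [map_add, add_mul]; exact add _ _ (hu a ha) (hw a ha)
  obtain ⟨w, rfl⟩ := RingQuot.mkAlgHom_surjective k r a
  simpa using mul_mem w 1 one

namespace Um

section Algebra

omit [DecidableEq I]

variable {A : I → I → ℤ} {R : Type} [Ring R] [Algebra KK R]

lemma induction {P : Um A → Prop} (one : P 1) (add : ∀ a b, P a → P b → P (a + b))
    (smul : ∀ (c : KK) a, P a → P (c • a)) (fgen_mul : ∀ j a, P a → P (fgen A j * a))
    (a : Um A) : P a :=
  freeAlgebra_ringQuot_induction one add smul fgen_mul a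

lemma algHom_ext {f g : Um A →ₐ[KK] R} (h : ∀ i, f (fgen A i) = g (fgen A i)) : f = g :=
  RingQuot.ringQuot_ext' _ _ _ (FreeAlgebra.hom_ext (funext h))

lemma serreElt_fgen {i j : I} (hij : i ≠ j) : serreElt A (fgen A) i j = 0 := by
  rw [← map_zero (RingQuot.mkAlgHom KK (SerreRel A)),
    ← RingQuot.mkAlgHom_rel KK (SerreRel.serre i j hij), map_serreElt]
  rfl

/-- The universal property of `U_q^-(g)`: families satisfying the `q`-Serre relations are images of
the generators. -/
def lift (x : I → R) (h : ∀ i j, i ≠ j → serreElt A x i j = 0) : Um A →ₐ[KK] R :=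
  RingQuot.liftAlgHom KK ⟨FreeAlgebra.lift KK x, by
    rintro _ _ ⟨i, j, hij⟩
    rw [lift_serreElt, h i j hij, map_zero]⟩

lemma lift_mk (x : I → R) (h : ∀ i j, i ≠ j → serreElt A x i j = 0) (w : FreeAlgebra KK I) :
    lift x h (RingQuot.mkAlgHom KK (SerreRel A) w) = FreeAlgebra.lift KK x w :=
  RingQuot.liftAlgHom_mkAlgHom_apply _ _ _ _

@[simp] lemma lift_fgen (x : I → R) (h : ∀ i j, i ≠ j → serreElt A x i j = 0) (i : I) :
    lift x h (fgen A i) = x i := by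
  rw [fgen, lift_mk, FreeAlgebra.lift_ι_apply]

/-- The endomorphism of `U_q^-(g)` rescaling each generator `f_i` by `c i`. -/
def scale (A : I → I → ℤ) (c : I → KK) : Um A →ₐ[KK] Um A :=
  lift (fun l => c l • fgen A l) fun i j hij => by
    rw [serreElt_smul, serreElt_fgen hij, smul_zero]

@[simp] lemma scale_fgen (c : I → KK) (i : I) : scale A c (fgen A i) = c i • fgen A i :=
  lift_fgen _ _ i

lemma scale_scale_of_mul_eq_one {b c : I → KK} (h : ∀ i, b i * c i = 1) (a : Um A) :
    scale A b (scale A c a) = a := by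
  suffices (scale A b).comp (scale A c) = AlgHom.id KK (Um A) from DFunLike.congr_fun this a
  exact algHom_ext fun i => by simp [smul_smul, mul_comm (c i), h]

lemma scale_comm (b c : I → KK) (a : Um A) : scale A b (scale A c a) = scale A c (scale A b a) := by
  suffices (scale A b).comp (scale A c) = (scale A c).comp (scale A b) from
    DFunLike.congr_fun this a
  exact algHom_ext fun i => by simp [smul_comm (b i)]

end Algebra

section SkewDerivation

variable {A : I → I → ℤ} (hA : IsCartan A) (ε : ℤˣ) (k : I)

/-- `freeSkewHom` for the skew derivation sending `f_k` to `1` and the other generators to `0`,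
descended to `U_q^-(g)`. -/
def skewHom : Um A →ₐ[KK] Matrix (Fin 2) (Fin 2) (Um A) :=
  lift (fun l => !![qZ (ε * A k l) • fgen A l, if k = l then 1 else 0; 0, fgen A l])
    fun i j hij => by
      rw [← lift_serreElt]
      change freeSkewHom (fun l => qZ (ε * A k l) • fgen A l) (fgen A) _ _ = 0
      rw [freeSkewHom_eq, freeSkewDeriv_serreElt hA ε k (fun _ => rfl) hij, lift_serreElt,
        lift_serreElt, serreElt_smul, serreElt_fgen hij, smul_zero]
      ext r s
      fin_cases r <;> fin_cases s <;> rfl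

/-- The skew derivation of `U_q^-(g)` with `f_j ↦ δ_{jk}` and twist `f_j ↦ q^{ε (α_k, α_j)} f_j`.
For `ε = ± 1` these are Kashiwara's two families of operators. -/
def skewDeriv : Um A →ₗ[KK] Um A :=
  Matrix.entryLinearMap KK (Um A) 0 1 ∘ₗ (skewHom hA ε k).toLinearMap

lemma skewDeriv_one : skewDeriv hA ε k 1 = 0 := by
  simp [skewDeriv]

lemma skewDeriv_fgen_mul (j : I) (a : Um A) :
    skewDeriv hA ε k (fgen A j * a) =
      qZ (ε * A k j) • (fgen A j * skewDeriv hA ε k a) + if k = j then a else 0 := by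
  have h11 (a : Um A) : skewHom hA ε k a 1 1 = a := by
    induction a using Um.induction with
    | one => simp
    | add a b ha hb => simp [ha, hb]
    | smul c a ha => simp [ha]
    | fgen_mul j a ha => rw [map_mul, Matrix.mul_apply, Fin.sum_univ_two, ha]; simp [skewHom]
  have h01 (a : Um A) : skewDeriv hA ε k a = skewHom hA ε k a 0 1 := rfl
  rw [h01, h01, map_mul, Matrix.mul_apply, Fin.sum_univ_two, h11]
  simp [skewHom]

lemma skewDeriv_scale (c : I → KK) (a : Um A) :
    skewDeriv hA ε k (scale A c a) = c k • scale A c (skewDeriv hA ε k a) := by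
  induction a using Um.induction with
  | one => simp [skewDeriv_one]
  | add a b ha hb => simp only [map_add, ha, hb, smul_add]
  | smul t a ha => simp only [map_smul, ha, smul_comm t]
  | fgen_mul j a ha =>
    rw [map_mul, scale_fgen, smul_mul_assoc, map_smul, skewDeriv_fgen_mul, ha, skewDeriv_fgen_mul,
      map_add, map_smul, map_mul, scale_fgen, smul_mul_assoc, mul_smul_comm, smul_add, smul_add]
    congr 1
    · simp only [smul_smul]
      congr 1
      ring
    · split_ifs with hkj
      · rw [hkj]
      · simp

end SkewDerivation

end Um

section ThetaPairing

omit [DecidableEq I]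

/-- The pairing `(α_i + α_{θ(i)}, α_j)`. -/
def thetaPairing (A : I → I → ℤ) (θ : I → I) (i j : I) : ℤ := A i j + A (θ i) j

variable {A : I → I → ℤ} {θ : I → I}

lemma thetaPairing_theta_left (hθ : IsTheta A θ) (i j : I) :
    thetaPairing A θ (θ i) j = thetaPairing A θ i j := by
  rw [thetaPairing, thetaPairing, hθ.1, add_comm]

lemma thetaPairing_theta_right (hθ : IsTheta A θ) (i j : I) :
    thetaPairing A θ i (θ j) = thetaPairing A θ i j := by
  rw [thetaPairing, thetaPairing, ← hθ.2 i (θ j), ← hθ.2 (θ i) (θ j), hθ.1, hθ.1, add_comm]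

end ThetaPairing

omit [DecidableEq I] in
lemma serreElt_apply_of_intertwines {A : I → I → ℤ} {M N : Type} [AddCommGroup M] [Module KK M]
    [AddCommGroup N] [Module KK N] {x : I → Module.End KK M} {y : I → Module.End KK N}
    (φ : M →ₗ[KK] N) (h : ∀ l m, y l (φ m) = φ (x l m)) (i j : I) (m : M) :
    serreElt A y i j (φ m) = φ (serreElt A x i j m) := by
  have hpow (l : I) (n : ℕ) : ∀ m, (y l ^ n) (φ m) = φ ((x l ^ n) m) := by
    induction n with
    | zero => exact fun m => rfl
    | succ n ih =>
      intro m
      rw [pow_succ, pow_succ, Module.End.mul_apply, Module.End.mul_apply, h, ih]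
  simp only [serreElt, LinearMap.sum_apply, LinearMap.smul_apply, Module.End.mul_apply, hpow, h,
    map_sum, map_smul]

/-- A representation on `C` of the part of `B_θ(g)` generated by the `E_i` and `T_i`. -/
structure BorelRep (A : I → I → ℤ) (θ : I → I) (C : Type) [AddCommGroup C] [Module KK C] where
  T : I → (Module.End KK C)ˣ
  E : I → Module.End KK C
  T_comm : ∀ i j, Commute (T i) (T j)
  T_theta : ∀ i, T (θ i) = T i
  T_mul_E : ∀ i j, T i * E j = qZ (thetaPairing A θ i j) • (E j * T i)
  serreElt_E : ∀ i j, i ≠ j → serreElt A E i j = 0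

namespace BorelRep

variable {A : I → I → ℤ} {θ : I → I} {C : Type} [AddCommGroup C] [Module KK C]
  (V : BorelRep A θ C)

section Torus

omit [DecidableEq I]

/-- `U_q^-(g)` acting on the left factor of `U_q^-(g) ⊗ C`. -/
def indF (A : I → I → ℤ) (C : Type) [AddCommGroup C] [Module KK C] :
    Um A →ₐ[KK] Module.End KK (Um A ⊗[KK] C) :=
  (Module.End.rTensorAlgHom KK (Um A) C).comp (Algebra.lmul KK (Um A))

@[simp] lemma indF_tmul (a b : Um A) (c : C) : indF A C a (b ⊗ₜ c) = (a * b) ⊗ₜ c := rfl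

-- Unification does not find the `AddCommGroup` behind the `AddCommMonoid` of this tensor product.
instance instRingEnd : Ring (Module.End KK (Um A ⊗[KK] C)) :=
  @Module.End.instRing KK (Um A ⊗[KK] C) _ TensorProduct.addCommGroup _

lemma serreElt_indF (C : Type) [AddCommGroup C] [Module KK C] {i j : I} (hij : i ≠ j) :
    serreElt A (fun l => indF A C (fgen A l)) i j = 0 := by
  rw [← map_serreElt, Um.serreElt_fgen hij, map_zero]

lemma end_ext {f g : Module.End KK (Um A ⊗[KK] C)} (one : ∀ c, f (1 ⊗ₜ c) = g (1 ⊗ₜ c))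
    (fgen_mul : ∀ j v, f v = g v → f (indF A C (fgen A j) v) = g (indF A C (fgen A j) v)) :
    f = g := by
  refine TensorProduct.ext' fun a c => ?_
  induction a using Um.induction with
  | one => exact one c
  | add a b ha hb => rw [TensorProduct.add_tmul, map_add, map_add, ha, hb]
  | smul t a ha => rw [← TensorProduct.smul_tmul', map_smul, map_smul, ha]
  | fgen_mul j a ha => exact fgen_mul j _ ha

/-- The action of `T_i` on `U_q^-(g) ⊗ C`, obtained by moving `T_i` to the right past `U_q^-(g)`. -/
def indT (i : I) : (Module.End KK (Um A ⊗[KK] C))ˣ where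
  val := TensorProduct.map (Um.scale A fun j => qZ (-thetaPairing A θ i j)).toLinearMap (V.T i)
  inv := TensorProduct.map (Um.scale A fun j => qZ (thetaPairing A θ i j)).toLinearMap ↑(V.T i)⁻¹
  val_inv := TensorProduct.ext' fun a c => by
    change Um.scale A _ (Um.scale A _ a) ⊗ₜ (V.T i * ↑(V.T i)⁻¹ : Module.End KK C) c = a ⊗ₜ c
    rw [Units.mul_inv, Um.scale_scale_of_mul_eq_one fun j => qZ_neg_mul_qZ _, Module.End.one_apply]
  inv_val := TensorProduct.ext' fun a c => by
    change Um.scale A _ (Um.scale A _ a) ⊗ₜ (↑(V.T i)⁻¹ * V.T i : Module.End KK C) c = a ⊗ₜ c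
    rw [Units.inv_mul, Um.scale_scale_of_mul_eq_one fun j => qZ_mul_qZ_neg _, Module.End.one_apply]

lemma indT_tmul (i : I) (a : Um A) (c : C) :
    (V.indT i : Module.End KK (Um A ⊗[KK] C)) (a ⊗ₜ c) =
      Um.scale A (fun j => qZ (-thetaPairing A θ i j)) a ⊗ₜ (V.T i : Module.End KK C) c := rfl

lemma indT_comm (i j : I) : Commute (V.indT i) (V.indT j) := by
  have hC : (V.T i * V.T j : Module.End KK C) = V.T j * V.T i := congrArg Units.val (V.T_comm i j)
  refine Units.ext (TensorProduct.ext' fun a c => ?_)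
  simp only [Units.val_mul, Module.End.mul_apply, indT_tmul]
  rw [Um.scale_comm, ← Module.End.mul_apply, hC, Module.End.mul_apply]

lemma indT_theta (hθ : IsTheta A θ) (i : I) : V.indT (θ i) = V.indT i := by
  refine Units.ext (TensorProduct.ext' fun a c => ?_)
  simp only [indT_tmul, V.T_theta, thetaPairing_theta_left hθ]

lemma indT_mul_indF (i j : I) :
    (V.indT i * indF A C (fgen A j) : Module.End KK (Um A ⊗[KK] C)) =
      qZ (-thetaPairing A θ i j) • (indF A C (fgen A j) * V.indT i) :=
  TensorProduct.ext' fun a c => by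
    rw [LinearMap.smul_apply, Module.End.mul_apply, Module.End.mul_apply, indF_tmul, indT_tmul,
      indT_tmul, indF_tmul, map_mul, Um.scale_fgen, smul_mul_assoc, TensorProduct.smul_tmul']

end Torus

variable (hA : IsCartan A)

/-- The action of `E_k` on `U_q^-(g) ⊗ C`, obtained by moving `E_k` to the right past `U_q^-(g)`. -/
def indE (k : I) : Module.End KK (Um A ⊗[KK] C) :=
  TensorProduct.map (Um.scale A fun j => qZ (-A k j)).toLinearMap (V.E k) +
    (Um.skewDeriv hA (-1) k).rTensor C + V.indT k * (Um.skewDeriv hA 1 (θ k)).rTensor C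

lemma indE_tmul (k : I) (a : Um A) (c : C) :
    V.indE hA k (a ⊗ₜ c) =
      Um.scale A (fun j => qZ (-A k j)) a ⊗ₜ V.E k c + Um.skewDeriv hA (-1) k a ⊗ₜ c +
        (V.indT k : Module.End KK (Um A ⊗[KK] C)) (Um.skewDeriv hA 1 (θ k) a ⊗ₜ c) := rfl

lemma indE_one_tmul (k : I) (c : C) : V.indE hA k (1 ⊗ₜ c) = 1 ⊗ₜ V.E k c := by
  simp [indE_tmul, Um.skewDeriv_one]

lemma indE_mul_indF (k j : I) :
    V.indE hA k * indF A C (fgen A j) = qZ (-A k j) • (indF A C (fgen A j) * V.indE hA k) +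
      (if k = j then 1 else 0) +
        if θ k = j then (V.indT k : Module.End KK (Um A ⊗[KK] C)) else 0 := by
  refine TensorProduct.ext' fun a c => ?_
  have hT (v : Um A ⊗[KK] C) : (V.indT k : Module.End KK (Um A ⊗[KK] C)) (indF A C (fgen A j) v) =
      qZ (-thetaPairing A θ k j) •
        indF A C (fgen A j) ((V.indT k : Module.End KK (Um A ⊗[KK] C)) v) :=
    LinearMap.congr_fun (V.indT_mul_indF k j) v
  have hq : qZ (A (θ k) j) * qZ (-thetaPairing A θ k j) = qZ (-A k j) := by
    rw [← qZ_add, thetaPairing]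
    ring_nf
  simp only [Module.End.mul_apply, LinearMap.add_apply, LinearMap.smul_apply, indE_tmul, map_mul,
    indF_tmul, Um.scale_fgen, Um.skewDeriv_fgen_mul, TensorProduct.add_tmul, map_add, smul_add,
    ← TensorProduct.smul_tmul', map_smul, smul_mul_assoc, Units.val_one, Units.val_neg, one_mul,
    neg_mul]
  rw [← indF_tmul (fgen A j) (Um.skewDeriv hA 1 (θ k) a), hT, smul_smul, hq]
  split_ifs <;>
    simp only [TensorProduct.zero_tmul, map_zero, add_zero, LinearMap.zero_apply,
      Module.End.one_apply] <;>
    abel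

lemma indT_mul_indE (hθ : IsTheta A θ) (i k : I) :
    (V.indT i * V.indE hA k : Module.End KK (Um A ⊗[KK] C)) =
      qZ (thetaPairing A θ i k) • (V.indE hA k * V.indT i) := by
  refine TensorProduct.ext' fun a c => ?_
  have hE : (V.T i : Module.End KK C) (V.E k c) =
      qZ (thetaPairing A θ i k) • V.E k ((V.T i : Module.End KK C) c) :=
    LinearMap.congr_fun (V.T_mul_E i k) c
  have hT (v : Um A ⊗[KK] C) : (V.indT i : Module.End KK (Um A ⊗[KK] C))
      ((V.indT k : Module.End KK (Um A ⊗[KK] C)) v) =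
      (V.indT k : Module.End KK (Um A ⊗[KK] C))
        ((V.indT i : Module.End KK (Um A ⊗[KK] C)) v) :=
    LinearMap.congr_fun (congrArg Units.val (V.indT_comm i k)) v
  simp only [Module.End.mul_apply, LinearMap.smul_apply, indE_tmul, map_add, indT_tmul,
    Um.skewDeriv_scale, thetaPairing_theta_right hθ, ← TensorProduct.smul_tmul', map_smul, smul_add,
    smul_smul, qZ_mul_qZ_neg, one_smul, hE, TensorProduct.tmul_smul,
    Um.scale_comm (fun j => qZ (-A k j))]
  exact congrArg _ (hT (Um.skewDeriv hA 1 (θ k) a ⊗ₜ c))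

lemma serreElt_indE (hθ : IsTheta A θ) {i j : I} (hij : i ≠ j) :
    serreElt A (V.indE hA) i j = 0 := by
  refine end_ext (fun c => ?_) fun k v hv => ?_
  · have vacuum := serreElt_apply_of_intertwines (A := A) (N := Um A ⊗[KK] C)
      (TensorProduct.mk KK (Um A) C 1) (V.indE_one_tmul hA) i j c
    rw [V.serreElt_E i j hij, LinearMap.zero_apply, map_zero] at vacuum
    exact vacuum
  · have hT (l : I) : V.indE hA l * (V.indT k : Module.End KK (Um A ⊗[KK] C)) =
        qZ (-(A k l + A (θ k) l)) • (V.indT k * V.indE hA l) := by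
      rw [indT_mul_indE V hA hθ, smul_smul, thetaPairing, qZ_neg_mul_qZ, one_smul]
    have hF (l : I) : V.indE hA l * indF A C (fgen A k) =
        qZ (-A k l) • (indF A C (fgen A k) * V.indE hA l) + (if k = l then 1 else 0) +
          if θ k = l then (V.indT k : Module.End KK (Um A ⊗[KK] C)) else 0 := by
      rw [indE_mul_indF, hA.symm l k]
      have hkl : θ l = k ↔ θ k = l :=
        ⟨fun h => by rw [← h, hθ.1], fun h => by rw [← h, hθ.1]⟩
      simp only [hkl, @eq_comm _ l k]
      congr 1
      split_ifs with h
      · rw [← h, V.indT_theta hθ]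
      · rfl
    obtain ⟨z, hz⟩ := serreElt_mul_eq hA θ k hT hF hij
    have hz := LinearMap.congr_fun hz v
    rw [LinearMap.smul_apply, Module.End.mul_apply, Module.End.mul_apply, hv] at hz
    simpa using hz

/-- The action of the generators of `B_θ(g)` on `U_q^-(g) ⊗ C`. -/
def indGen : BGen I → Module.End KK (Um A ⊗[KK] C)
  | .E i => V.indE hA i
  | .F i => indF A C (fgen A i)
  | .T i => V.indT i
  | .Ti i => ↑(V.indT i)⁻¹

lemma lift_indGen_rel (hθ : IsTheta A θ) ⦃x y : FreeAlgebra KK (BGen I)⦄ (h : BRel A θ x y) :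
    FreeAlgebra.lift KK (V.indGen hA) x = FreeAlgebra.lift KK (V.indGen hA) y := by
  have hE i : FreeAlgebra.lift KK (V.indGen hA) (bE i) = V.indE hA i := FreeAlgebra.lift_ι_apply _ _
  have hF i : FreeAlgebra.lift KK (V.indGen hA) (bF i) = indF A C (fgen A i) :=
    FreeAlgebra.lift_ι_apply _ _
  have hT i : FreeAlgebra.lift KK (V.indGen hA) (bT i) = V.indT i := FreeAlgebra.lift_ι_apply _ _
  have hTi i : FreeAlgebra.lift KK (V.indGen hA) (bTi i) = ↑(V.indT i)⁻¹ :=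
    FreeAlgebra.lift_ι_apply _ _
  cases h with
  | T_inv_right i => rw [map_mul, hT, hTi, map_one, Units.mul_inv]
  | T_inv_left i => rw [map_mul, hT, hTi, map_one, Units.inv_mul]
  | T_comm i j => simp only [map_mul, hT]; exact congrArg Units.val (V.indT_comm i j)
  | T_theta i => rw [hT, hT, V.indT_theta hθ]
  | Ti_theta i => rw [hTi, hTi, V.indT_theta hθ]
  | TE i j => simp only [map_mul, map_smul, hT, hE]; exact V.indT_mul_indE hA hθ i j
  | TF i j => simp only [map_mul, map_smul, hT, hF]; exact V.indT_mul_indF i j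
  | EF i j =>
    simp only [map_add, map_mul, map_smul, hE, hF, V.indE_mul_indF, map_one, map_zero, hT,
      apply_ite (FreeAlgebra.lift KK (V.indGen hA))]
  | Eserre i j hij =>
    have := map_serreElt A (FreeAlgebra.lift KK (V.indGen hA)) bE i j
    simp only [hE] at this
    rw [this, V.serreElt_indE hA hθ hij, map_zero]
  | Fserre i j hij =>
    have := map_serreElt A (FreeAlgebra.lift KK (V.indGen hA)) bF i j
    simp only [hF] at this
    rw [this, serreElt_indF C hij, map_zero]

/-- The representation of `B_θ(g)` on `U_q^-(g) ⊗ C` induced from `C`. -/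
def ind (hθ : IsTheta A θ) : Bth A θ →ₐ[KK] Module.End KK (Um A ⊗[KK] C) :=
  RingQuot.liftAlgHom KK ⟨FreeAlgebra.lift KK (V.indGen hA), V.lift_indGen_rel hA hθ⟩

lemma ind_mk_ι (hθ : IsTheta A θ) (g : BGen I) :
    V.ind hA hθ (RingQuot.mkAlgHom KK (BRel A θ) (FreeAlgebra.ι KK g)) = V.indGen hA g :=
  (RingQuot.liftAlgHom_mkAlgHom_apply _ _ _ _).trans (FreeAlgebra.lift_ι_apply _ _)

end BorelRep

section TorusWeight

omit [DecidableEq I]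

variable {A : I → I → ℤ} {θ : I → I}

lemma orb_mk_theta (i : I) : (Quot.mk _ (θ i) : Orb θ) = Quot.mk _ i :=
  (Quot.sound (r := fun i j => θ i = j) rfl).symm

/-- The `i`-th component of `torusWeight`: the pairing of `α_i + α_{θ(i)}` with `α_l`, as a function
on `θ`-orbits. -/
def orbPairing (hθ : IsTheta A θ) (l : I) : Orb θ → ℤ :=
  Quot.lift (thetaPairing A θ · l) fun i _ h => h ▸ (thetaPairing_theta_left hθ i l).symm

/-- The exponent of `q` in the commutation of `E_l` with the torus monomial of exponent `μ`. -/
def torusWeight (hθ : IsTheta A θ) (l : I) : (Orb θ →₀ ℤ) →+ ℤ :=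
  Finsupp.liftAddHom fun o => AddMonoidHom.mulRight (orbPairing hθ l o)

@[simp] lemma torusWeight_single (hθ : IsTheta A θ) (l i : I) (n : ℤ) :
    torusWeight hθ l (Finsupp.single (Quot.mk _ i) n) = n * thetaPairing A θ i l :=
  Finsupp.liftAddHom_apply_single _ _ _

end TorusWeight

section Universal

omit [DecidableEq I]

variable (A : I → I → ℤ) (θ : I → I)

/-- `K[T] ⊗ U_q^+(g)`, written as Laurent polynomials with coefficients in `U_q^+(g)`. -/
abbrev UnivBorel : Type := (Orb θ →₀ ℤ) →₀ Um A

variable {θ} in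
/-- Multiplication of `K[T] ⊗ U_q^+(g)` by the torus monomials. -/
def torusShift : Multiplicative (Orb θ →₀ ℤ) →* Module.End KK (UnivBorel A θ) where
  toFun ν := Finsupp.lmapDomain (Um A) KK (ν.toAdd + ·)
  map_one' := by ext; simp
  map_mul' μ ν := by ext; simp [add_assoc]

@[simp] lemma torusShift_single (ν : Multiplicative (Orb θ →₀ ℤ)) (μ : Orb θ →₀ ℤ) (b : Um A) :
    torusShift A ν (Finsupp.single μ b) = Finsupp.single (ν.toAdd + μ) b :=
  Finsupp.mapDomain_single

variable {A θ}

-- Unification does not find the `AddCommGroup` behind the `AddCommMonoid` of this `Finsupp` type.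
instance UnivBorel.instRingEnd : Ring (Module.End KK (UnivBorel A θ)) :=
  @Module.End.instRing KK (UnivBorel A θ) _ Finsupp.instAddCommGroup _

/-- Left multiplication by `e_l` on `K[T] ⊗ U_q^+(g)`. -/
def univE (hθ : IsTheta A θ) (l : I) : Module.End KK (UnivBorel A θ) :=
  Finsupp.lsum KK fun μ =>
    qZ (-torusWeight hθ l μ) • Finsupp.lsingle μ ∘ₗ LinearMap.mulLeft KK (fgen A l)

@[simp] lemma univE_single (hθ : IsTheta A θ) (l : I) (μ : Orb θ →₀ ℤ) (b : Um A) :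
    univE hθ l (Finsupp.single μ b) =
      qZ (-torusWeight hθ l μ) • Finsupp.single μ (fgen A l * b) := by
  simp [univE]

lemma serreElt_univE (hθ : IsTheta A θ) {i j : I} (hij : i ≠ j) :
    serreElt A (univE hθ) i j = 0 := by
  refine Finsupp.lhom_ext fun μ b => ?_
  have hμ := serreElt_apply_of_intertwines (A := A) (N := UnivBorel A θ) (y := univE hθ)
    (x := fun l => qZ (-torusWeight hθ l μ) • Algebra.lmul KK (Um A) (fgen A l))
    (Finsupp.lsingle μ) (fun l b => by simp) i j b
  rw [serreElt_smul, ← map_serreElt, Um.serreElt_fgen hij, map_zero, smul_zero] at hμ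
  simpa using hμ

/-- The representation of the `E_i` and `T_i` on `K[T] ⊗ U_q^+(g)` by left multiplication. -/
def univBorelRep (hθ : IsTheta A θ) : BorelRep A θ (UnivBorel A θ) where
  T i := (torusShift A).toHomUnits (.ofAdd (Finsupp.single (Quot.mk _ i) 1))
  E := univE hθ
  T_comm i j := (Commute.all _ _).map _
  T_theta i := by rw [orb_mk_theta]
  T_mul_E i j := Finsupp.lhom_ext fun μ b => by
    rw [LinearMap.smul_apply, Module.End.mul_apply, Module.End.mul_apply, univE_single, map_smul,
      MonoidHom.coe_toHomUnits, torusShift_single, torusShift_single, univE_single, smul_smul,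
      ← qZ_add, toAdd_ofAdd, map_add, torusWeight_single, one_mul, neg_add, add_neg_cancel_left]
  serreElt_E i j hij := serreElt_univE hθ hij

end Universal

namespace Bth

section Relations

variable (A : I → I → ℤ) (θ : I → I)

lemma Tg_mul_Tig (i : I) : Tg A θ i * Tig A θ i = 1 := by
  simpa [Tg, Tig] using RingQuot.mkAlgHom_rel KK (BRel.T_inv_right (A := A) (θ := θ) i)

lemma Tig_mul_Tg (i : I) : Tig A θ i * Tg A θ i = 1 := by
  simpa [Tg, Tig] using RingQuot.mkAlgHom_rel KK (BRel.T_inv_left (A := A) (θ := θ) i)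

lemma Tg_comm (i j : I) : Tg A θ i * Tg A θ j = Tg A θ j * Tg A θ i := by
  simpa [Tg] using RingQuot.mkAlgHom_rel KK (BRel.T_comm (A := A) (θ := θ) i j)

lemma Tg_theta (i : I) : Tg A θ (θ i) = Tg A θ i :=
  RingQuot.mkAlgHom_rel KK (BRel.T_theta i)

lemma Tg_mul_Eg (i j : I) :
    Tg A θ i * Eg A θ j = qZ (thetaPairing A θ i j) • (Eg A θ j * Tg A θ i) := by
  simpa [Tg, Eg, thetaPairing] using RingQuot.mkAlgHom_rel KK (BRel.TE (A := A) (θ := θ) i j)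

lemma Tg_mul_Fg (i j : I) :
    Tg A θ i * Fg A θ j = qZ (-thetaPairing A θ i j) • (Fg A θ j * Tg A θ i) := by
  simpa [Tg, Fg, thetaPairing] using RingQuot.mkAlgHom_rel KK (BRel.TF (A := A) (θ := θ) i j)

lemma Eg_mul_Fg (i j : I) : Eg A θ i * Fg A θ j = qZ (-A i j) • (Fg A θ j * Eg A θ i) +
    (if i = j then 1 else 0) + if θ i = j then Tg A θ i else 0 := by
  simpa [Eg, Fg, Tg, apply_ite (RingQuot.mkAlgHom KK (BRel A θ))] using
    RingQuot.mkAlgHom_rel KK (BRel.EF (A := A) (θ := θ) i j)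

variable {A θ} {i j : I}

lemma serreElt_Eg (hij : i ≠ j) : serreElt A (Eg A θ) i j = 0 := by
  rw [← map_zero (RingQuot.mkAlgHom KK (BRel A θ)),
    ← RingQuot.mkAlgHom_rel KK (BRel.Eserre i j hij), map_serreElt]
  rfl

lemma serreElt_Fg (hij : i ≠ j) : serreElt A (Fg A θ) i j = 0 := by
  rw [← map_zero (RingQuot.mkAlgHom KK (BRel A θ)),
    ← RingQuot.mkAlgHom_rel KK (BRel.Fserre i j hij), map_serreElt]
  rfl

end Relations

section Maps

variable (A : I → I → ℤ) (θ : I → I)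

/-- The homomorphism `U_q^-(g) → B_θ(g)` with `f_i ↦ F_i`. -/
def homF : Um A →ₐ[KK] Bth A θ := Um.lift (Fg A θ) fun _ _ => serreElt_Fg

/-- The homomorphism `U_q^+(g) → B_θ(g)` with `e_i ↦ E_i`. -/
def homE : Um A →ₐ[KK] Bth A θ := Um.lift (Eg A θ) fun _ _ => serreElt_Eg

@[simp] lemma homF_fgen (i : I) : homF A θ (fgen A i) = Fg A θ i := Um.lift_fgen _ _ i

@[simp] lemma homE_fgen (i : I) : homE A θ (fgen A i) = Eg A θ i := Um.lift_fgen _ _ i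

/-- The invertible element `T_i`, indexed by the `θ`-orbit of `i`. -/
def orbT : Orb θ → (Bth A θ)ˣ :=
  Quot.lift (fun i => ⟨Tg A θ i, Tig A θ i, Tg_mul_Tig A θ i, Tig_mul_Tg A θ i⟩)
    fun i _ h => Units.ext (h ▸ (Tg_theta A θ i).symm)

lemma orbT_zpow (i : I) (k : ℕ) :
    ((orbT A θ (Quot.mk _ i) ^ (k : ℤ) : (Bth A θ)ˣ) : Bth A θ) = Tg A θ i ^ k ∧
      ((orbT A θ (Quot.mk _ i) ^ (-k : ℤ) : (Bth A θ)ˣ) : Bth A θ) = Tig A θ i ^ k := by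
  rw [zpow_natCast, zpow_neg, zpow_natCast, ← inv_pow, Units.val_pow_eq_pow_val,
    Units.val_pow_eq_pow_val]
  exact ⟨rfl, rfl⟩

variable {A θ} in
lemma eq_orbT_zpow {Tm : Orb θ → ℤ → Bth A θ}
    (h : ∀ (i : I) (k : ℕ), Tm (Quot.mk _ i) (k : ℤ) = Tg A θ i ^ k ∧
      Tm (Quot.mk _ i) (-(k : ℤ)) = Tig A θ i ^ k) (o : Orb θ) (n : ℤ) :
    Tm o n = ↑(orbT A θ o ^ n) := by
  obtain ⟨i⟩ := o
  obtain ⟨k, rfl | rfl⟩ := n.eq_nat_or_neg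
  exacts [(h i k).1.trans (orbT_zpow A θ i k).1.symm, (h i k).2.trans (orbT_zpow A θ i k).2.symm]

instance isMulCommutative_closure_orbT :
    IsMulCommutative (Subgroup.closure (Set.range (orbT A θ))) :=
  Subgroup.isMulCommutative_closure fun x hx y hy => by
    obtain ⟨⟨i⟩, rfl⟩ := hx
    obtain ⟨⟨j⟩, rfl⟩ := hy
    exact Units.ext (Tg_comm A θ i j)

open scoped IsMulCommutative in
/-- The monomials in the `T_i^{±1}`, indexed by their exponent vectors. -/
def monomial : Multiplicative (Orb θ →₀ ℤ) →* Bth A θ :=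
  ((Units.coeHom (Bth A θ)).comp (Subgroup.closure (Set.range (orbT A θ))).subtype).comp
    (AddMonoidHom.toMultiplicativeLeft (Finsupp.liftAddHom fun o => zmultiplesHom _
      (Additive.ofMul ⟨orbT A θ o, Subgroup.subset_closure ⟨o, rfl⟩⟩)))

lemma monomial_single (o : Orb θ) (n : ℤ) :
    monomial A θ (.ofAdd (Finsupp.single o n)) = ↑(orbT A θ o ^ n) := by
  simp [monomial]

lemma monomial_ofAdd (μ : Orb θ →₀ ℤ) : monomial A θ (.ofAdd μ) =
    (μ.support.toList.map fun o => (↑(orbT A θ o ^ μ o) : Bth A θ)).prod := by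
  have hμ : Multiplicative.ofAdd μ =
      (μ.support.toList.map fun o => Multiplicative.ofAdd (Finsupp.single o (μ o))).prod := by
    rw [Finset.prod_map_toList, ← ofAdd_sum]
    exact congrArg _ (Finsupp.sum_single μ).symm
  rw [hμ, map_list_prod, List.map_map]
  exact congrArg List.prod (List.map_congr_left fun o _ => monomial_single A θ o _)

/-- The map `ι : K[T] → B_θ(g)`, with Laurent polynomials encoded by their coefficients. -/
def torusMap : ((Orb θ →₀ ℤ) →₀ KK) →ₗ[KK] Bth A θ :=
  Finsupp.linearCombination KK fun μ => monomial A θ (.ofAdd μ)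

lemma torusMap_single (μ : Orb θ →₀ ℤ) (c : KK) : torusMap A θ (Finsupp.single μ c) =
    c • (μ.support.toList.map fun o => (↑(orbT A θ o ^ μ o) : Bth A θ)).prod := by
  rw [torusMap, Finsupp.linearCombination_single, monomial_ofAdd]

/-- The multiplication map `a ⊗ t ⊗ b ↦ F(a) ι(t) E(b)`. -/
def triangularMap : Um A ⊗[KK] (((Orb θ →₀ ℤ) →₀ KK) ⊗[KK] Um A) →ₗ[KK] Bth A θ :=
  LinearMap.mul' KK (Bth A θ) ∘ₗ TensorProduct.map (homF A θ).toLinearMap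
    (LinearMap.mul' KK (Bth A θ) ∘ₗ TensorProduct.map (torusMap A θ) (homE A θ).toLinearMap)

lemma triangularMap_tmul_single (a : Um A) (μ : Orb θ →₀ ℤ) (c : KK) (b : Um A) :
    triangularMap A θ (a ⊗ₜ (Finsupp.single μ c ⊗ₜ b)) =
      c • (homF A θ a * (monomial A θ (.ofAdd μ) * homE A θ b)) := by
  simp [triangularMap, torusMap]

end Maps

section Surjective

variable {A : I → I → ℤ} {θ : I → I}

omit [DecidableEq I] in
lemma exponent_induction {P : (Orb θ →₀ ℤ) → Prop} (zero : P 0)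
    (add : ∀ μ ν, P μ → P ν → P (μ + ν)) (neg : ∀ μ, P μ → P (-μ))
    (single_one : ∀ i, P (Finsupp.single (Quot.mk _ i) 1)) (μ : Orb θ →₀ ℤ) : P μ := by
  induction μ using Finsupp.induction_linear with
  | zero => exact zero
  | add μ ν hμ hν => exact add μ ν hμ hν
  | single o n =>
    obtain ⟨i⟩ := o
    induction n using Int.induction_on with
    | zero => rwa [Finsupp.single_zero]
    | succ n ih => rw [Finsupp.single_add]; exact add _ _ ih (single_one i)
    | pred n ih =>
      rw [sub_eq_add_neg, Finsupp.single_add]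
      exact add _ _ ih (by rw [Finsupp.single_neg]; exact neg _ (single_one i))

lemma monomial_single_one (i : I) :
    monomial A θ (.ofAdd (Finsupp.single (Quot.mk _ i) 1)) = Tg A θ i := by
  rw [monomial_single, zpow_one]
  rfl

lemma monomial_mul_of_skew {x : Bth A θ} {w : (Orb θ →₀ ℤ) →+ ℤ}
    (h : ∀ i, Tg A θ i * x = qZ (w (Finsupp.single (Quot.mk _ i) 1)) • (x * Tg A θ i))
    (μ : Orb θ →₀ ℤ) :
    monomial A θ (.ofAdd μ) * x = qZ (w μ) • (x * monomial A θ (.ofAdd μ)) := by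
  induction μ using exponent_induction with
  | zero => simp
  | add μ ν hμ hν =>
    rw [ofAdd_add, map_mul, mul_assoc, hν, mul_smul_comm, ← mul_assoc, hμ, smul_mul_assoc,
      mul_assoc, smul_smul, map_add, ← qZ_add, add_comm (w ν)]
  | neg μ hμ =>
    have hinv : monomial A θ (.ofAdd μ) * monomial A θ (.ofAdd (-μ)) = 1 := by
      rw [← map_mul, ← ofAdd_add, add_neg_cancel, ofAdd_zero, map_one]
    have hinv' : monomial A θ (.ofAdd (-μ)) * monomial A θ (.ofAdd μ) = 1 := by
      rw [← map_mul, ← ofAdd_add, neg_add_cancel, ofAdd_zero, map_one]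
    calc monomial A θ (.ofAdd (-μ)) * x
        = qZ (-w μ) • (monomial A θ (.ofAdd (-μ)) * (monomial A θ (.ofAdd μ) * x) *
            monomial A θ (.ofAdd (-μ))) := by
          rw [hμ, mul_smul_comm, smul_mul_assoc, smul_smul, qZ_neg_mul_qZ, one_smul, mul_assoc,
            mul_assoc, hinv, mul_one]
      _ = qZ (w (-μ)) • (x * monomial A θ (.ofAdd (-μ))) := by
          rw [← mul_assoc, hinv', one_mul, map_neg w]
  | single_one i => rw [monomial_single_one, h]

lemma monomial_mul_Eg (hθ : IsTheta A θ) (μ : Orb θ →₀ ℤ) (l : I) :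
    monomial A θ (.ofAdd μ) * Eg A θ l =
      qZ (torusWeight hθ l μ) • (Eg A θ l * monomial A θ (.ofAdd μ)) :=
  monomial_mul_of_skew (fun i => by rw [Tg_mul_Eg, torusWeight_single, one_mul]) μ

lemma monomial_mul_Fg (hθ : IsTheta A θ) (μ : Orb θ →₀ ℤ) (l : I) :
    monomial A θ (.ofAdd μ) * Fg A θ l =
      qZ (-torusWeight hθ l μ) • (Fg A θ l * monomial A θ (.ofAdd μ)) :=
  monomial_mul_of_skew (w := -torusWeight hθ l)
    (fun i => by rw [Tg_mul_Fg, AddMonoidHom.neg_apply, torusWeight_single, one_mul]) μ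

variable (A θ) in
/-- The span of the products `F(a) T^μ E(b)`. -/
def triangularSpan : Submodule KK (Bth A θ) :=
  Submodule.span KK (Set.range fun p : Um A × (Orb θ →₀ ℤ) × Um A =>
    homF A θ p.1 * (monomial A θ (.ofAdd p.2.1) * homE A θ p.2.2))

lemma mul_monomial_mul_mem (a : Um A) (μ : Orb θ →₀ ℤ) (b : Um A) :
    homF A θ a * (monomial A θ (.ofAdd μ) * homE A θ b) ∈ triangularSpan A θ :=
  Submodule.subset_span ⟨(a, μ, b), rfl⟩

lemma monomial_mul_mem (μ : Orb θ →₀ ℤ) (b : Um A) :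
    monomial A θ (.ofAdd μ) * homE A θ b ∈ triangularSpan A θ := by
  simpa using mul_monomial_mul_mem 1 μ b

lemma mul_mem_triangularSpan {x : Bth A θ}
    (monomial_mul : ∀ μ b, x * (monomial A θ (.ofAdd μ) * homE A θ b) ∈ triangularSpan A θ)
    (Fg_mul : ∀ j, ∀ y ∈ triangularSpan A θ, x * y ∈ triangularSpan A θ →
      x * (Fg A θ j * y) ∈ triangularSpan A θ)
    {y : Bth A θ} (hy : y ∈ triangularSpan A θ) : x * y ∈ triangularSpan A θ := by
  induction hy using Submodule.span_induction with
  | zero => rw [mul_zero]; exact zero_mem _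
  | add y z _ _ hy hz => rw [mul_add]; exact add_mem hy hz
  | smul c y _ hy => rw [mul_smul_comm]; exact Submodule.smul_mem _ c hy
  | mem y hy =>
    obtain ⟨⟨a, μ, b⟩, rfl⟩ := hy
    dsimp only
    induction a using Um.induction with
    | one => simpa using monomial_mul μ b
    | add a a' ha ha' => rw [map_add, add_mul, mul_add]; exact add_mem ha ha'
    | smul c a ha => rw [map_smul, smul_mul_assoc, mul_smul_comm]; exact Submodule.smul_mem _ c ha
    | fgen_mul j a ha =>
      rw [map_mul, homF_fgen, mul_assoc]
      exact Fg_mul j _ (mul_monomial_mul_mem a μ b) ha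

lemma Fg_mul_mem (i : I) {y : Bth A θ} (hy : y ∈ triangularSpan A θ) :
    Fg A θ i * y ∈ triangularSpan A θ := by
  suffices triangularSpan A θ ≤ (triangularSpan A θ).comap (LinearMap.mulLeft KK (Fg A θ i)) from
    this hy
  refine Submodule.span_le.mpr ?_
  rintro _ ⟨⟨a, μ, b⟩, rfl⟩
  simpa [mul_assoc] using mul_monomial_mul_mem (fgen A i * a) μ b

lemma monomial_mul_mem_triangularSpan (hθ : IsTheta A θ) (ν : Orb θ →₀ ℤ) {y : Bth A θ}
    (hy : y ∈ triangularSpan A θ) : monomial A θ (.ofAdd ν) * y ∈ triangularSpan A θ := by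
  refine mul_mem_triangularSpan (fun μ b => ?_) (fun j y _ h => ?_) hy
  · rw [← mul_assoc, ← map_mul, ← ofAdd_add]
    exact monomial_mul_mem (ν + μ) b
  · rw [← mul_assoc, monomial_mul_Fg hθ, smul_mul_assoc, mul_assoc]
    exact Submodule.smul_mem _ _ (Fg_mul_mem j h)

lemma Tg_mul_mem (hθ : IsTheta A θ) (i : I) {y : Bth A θ} (hy : y ∈ triangularSpan A θ) :
    Tg A θ i * y ∈ triangularSpan A θ := by
  rw [← monomial_single_one]
  exact monomial_mul_mem_triangularSpan hθ _ hy

lemma Tig_mul_mem (hθ : IsTheta A θ) (i : I) {y : Bth A θ} (hy : y ∈ triangularSpan A θ) :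
    Tig A θ i * y ∈ triangularSpan A θ := by
  have hTi : Tig A θ i = monomial A θ (.ofAdd (Finsupp.single (Quot.mk _ i) (-1))) := by
    rw [monomial_single, zpow_neg_one]
    rfl
  rw [hTi]
  exact monomial_mul_mem_triangularSpan hθ _ hy

lemma Eg_mul_mem (hθ : IsTheta A θ) (i : I) {y : Bth A θ} (hy : y ∈ triangularSpan A θ) :
    Eg A θ i * y ∈ triangularSpan A θ := by
  refine mul_mem_triangularSpan (fun μ b => ?_) (fun j y hy h => ?_) hy
  · have hE : Eg A θ i * monomial A θ (.ofAdd μ) =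
        qZ (-torusWeight hθ i μ) • (monomial A θ (.ofAdd μ) * Eg A θ i) := by
      rw [monomial_mul_Eg hθ, smul_smul, qZ_neg_mul_qZ, one_smul]
    rw [← mul_assoc, hE, smul_mul_assoc, mul_assoc, ← homE_fgen, ← map_mul]
    exact Submodule.smul_mem _ _ (monomial_mul_mem μ _)
  · rw [← mul_assoc, Eg_mul_Fg, add_mul, add_mul, smul_mul_assoc, mul_assoc, ite_mul, ite_mul,
      one_mul, zero_mul]
    refine add_mem (add_mem (Submodule.smul_mem _ _ (Fg_mul_mem j h)) ?_) ?_
    · split_ifs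
      exacts [hy, zero_mem _]
    · split_ifs
      exacts [Tg_mul_mem hθ i hy, zero_mem _]

lemma triangularSpan_eq_top (hθ : IsTheta A θ) : triangularSpan A θ = ⊤ := by
  refine Submodule.eq_top_iff'.mpr fun x => ?_
  induction x using freeAlgebra_ringQuot_induction with
  | one => simpa using mul_monomial_mul_mem (A := A) (θ := θ) 1 0 1
  | add x y hx hy => exact add_mem hx hy
  | smul c x hx => exact Submodule.smul_mem _ c hx
  | ι_mul g x hx =>
    cases g with
    | E i => exact Eg_mul_mem hθ i hx
    | F i => exact Fg_mul_mem i hx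
    | T i => exact Tg_mul_mem hθ i hx
    | Ti i => exact Tig_mul_mem hθ i hx

lemma triangularMap_surjective (hθ : IsTheta A θ) : Function.Surjective (triangularMap A θ) := by
  refine LinearMap.range_eq_top.mp (top_le_iff.mp ?_)
  rw [← triangularSpan_eq_top hθ, triangularSpan, Submodule.span_le]
  rintro _ ⟨⟨a, μ, b⟩, rfl⟩
  exact ⟨a ⊗ₜ (Finsupp.single μ 1 ⊗ₜ b), by rw [triangularMap_tmul_single, one_smul]⟩

end Surjective

end Bth

namespace Bth

section Injective

variable {A : I → I → ℤ} {θ : I → I} (hA : IsCartan A) (hθ : IsTheta A θ)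

lemma ind_comp_homF {C : Type} [AddCommGroup C] [Module KK C] (V : BorelRep A θ C) :
    (V.ind hA hθ).comp (homF A θ) = BorelRep.indF A C :=
  Um.algHom_ext fun i => by
    rw [AlgHom.comp_apply, homF_fgen]
    exact V.ind_mk_ι hA hθ (.F i)

lemma ind_homE_apply (b : Um A) :
    (univBorelRep hθ).ind hA hθ (homE A θ b) (1 ⊗ₜ Finsupp.single 0 1) =
      1 ⊗ₜ Finsupp.single 0 b := by
  induction b using Um.induction with
  | one => rw [map_one, map_one, Module.End.one_apply]
  | add a b ha hb =>
    rw [map_add, map_add, LinearMap.add_apply, ha, hb, Finsupp.single_add, TensorProduct.tmul_add]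
  | smul c a ha =>
    rw [map_smul, map_smul, LinearMap.smul_apply, ha, ← Finsupp.smul_single,
      TensorProduct.tmul_smul]
  | fgen_mul j a ha =>
    have hE : (univBorelRep hθ).ind hA hθ (Eg A θ j) = (univBorelRep hθ).indE hA j :=
      BorelRep.ind_mk_ι _ hA hθ (.E j)
    have huniv : (univBorelRep hθ).E j = univE hθ j := rfl
    rw [map_mul, map_mul, Module.End.mul_apply, ha, homE_fgen, hE, BorelRep.indE_one_tmul, huniv,
      univE_single, map_zero, neg_zero, qZ_zero, one_smul]

lemma ind_monomial_apply (μ : Orb θ →₀ ℤ) (v : UnivBorel A θ) :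
    (univBorelRep hθ).ind hA hθ (monomial A θ (.ofAdd μ)) (1 ⊗ₜ v) =
      1 ⊗ₜ torusShift A (.ofAdd μ) v := by
  induction μ using exponent_induction generalizing v with
  | zero => simp
  | add μ ν hμ hν =>
    rw [ofAdd_add, map_mul, map_mul, Module.End.mul_apply, hν, hμ, map_mul, Module.End.mul_apply]
  | neg μ hμ =>
    have hv : v = torusShift A (.ofAdd μ) (torusShift A (.ofAdd (-μ)) v) := by
      rw [← Module.End.mul_apply, ← map_mul, ← ofAdd_add, add_neg_cancel, ofAdd_zero, map_one,
        Module.End.one_apply]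
    conv_lhs => rw [hv, ← hμ, ← Module.End.mul_apply, ← map_mul, ← map_mul, ← ofAdd_add,
      neg_add_cancel, ofAdd_zero, map_one, map_one, Module.End.one_apply]
  | single_one i =>
    rw [monomial_single_one]
    have hT : (univBorelRep hθ).ind hA hθ (Tg A θ i) = (univBorelRep hθ).indT i :=
      BorelRep.ind_mk_ι _ hA hθ (.T i)
    rw [hT, BorelRep.indT_tmul, map_one]
    rfl

/-- The orbit map `x ↦ x • (1 ⊗ 1)` of the representation induced from `univBorelRep`. -/
def vacuumMap : Bth A θ →ₗ[KK] Um A ⊗[KK] UnivBorel A θ :=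
  LinearMap.applyₗ (1 ⊗ₜ Finsupp.single 0 1) ∘ₗ ((univBorelRep hθ).ind hA hθ).toLinearMap

lemma vacuumMap_triangularMap (a : Um A) (μ : Orb θ →₀ ℤ) (c : KK) (b : Um A) :
    vacuumMap hA hθ (triangularMap A θ (a ⊗ₜ (Finsupp.single μ c ⊗ₜ b))) =
      a ⊗ₜ Finsupp.single μ (c • b) := by
  have hF : (univBorelRep hθ).ind hA hθ (homF A θ a) =
      BorelRep.indF A (UnivBorel A θ) a :=
    AlgHom.congr_fun (ind_comp_homF hA hθ (univBorelRep hθ)) a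
  rw [triangularMap_tmul_single, map_smul, vacuumMap, LinearMap.comp_apply,
    LinearMap.applyₗ_apply_apply, AlgHom.toLinearMap_apply, map_mul, map_mul, Module.End.mul_apply,
    Module.End.mul_apply, ind_homE_apply, ind_monomial_apply, torusShift_single, toAdd_ofAdd,
    add_zero, hF, BorelRep.indF_tmul, mul_one, ← TensorProduct.tmul_smul, Finsupp.smul_single]

end Injective

lemma triangularMap_injective {A : I → I → ℤ} {θ : I → I} (hA : IsCartan A) (hθ : IsTheta A θ) :
    Function.Injective (triangularMap A θ) := by
  classical
  have h : vacuumMap hA hθ ∘ₗ triangularMap A θ =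
      (TensorProduct.finsuppScalarLeft KK (Um A) (Orb θ →₀ ℤ)).lTensor (Um A) := by
    ext a μ b : 6
    simp [vacuumMap_triangularMap, TensorProduct.finsuppScalarLeft_apply_tmul]
  refine Function.Injective.of_comp (f := vacuumMap hA hθ) ?_
  rw [← LinearMap.coe_comp, h]
  exact LinearEquiv.injective _

lemma triangularMap_bijective {A : I → I → ℤ} {θ : I → I} (hA : IsCartan A) (hθ : IsTheta A θ) :
    Function.Bijective (triangularMap A θ) :=
  ⟨triangularMap_injective hA hθ, triangularMap_surjective hθ⟩

end Bth

theorem stmt7 (A : I → I → ℤ) (θ : I → I) (hA : IsCartan A) (hθ : IsTheta A θ) :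
    -- the structural maps exist …
    (∃ Fmap : Um A →ₐ[KK] Bth A θ, ∀ i, Fmap (fgen A i) = Fg A θ i) ∧
    (∃ Emap : Um A →ₐ[KK] Bth A θ, ∀ i, Emap (fgen A i) = Eg A θ i) ∧
    (∃ Tm : Orb θ → ℤ → Bth A θ, ∀ (i : I) (k : ℕ),
        Tm (Quot.mk _ i) (k : ℤ) = Tg A θ i ^ k ∧
        Tm (Quot.mk _ i) (-(k : ℤ)) = Tig A θ i ^ k) ∧
    (∀ (Tm : Orb θ → ℤ → Bth A θ),
      (∀ (i : I) (k : ℕ), Tm (Quot.mk _ i) (k : ℤ) = Tg A θ i ^ k ∧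
        Tm (Quot.mk _ i) (-(k : ℤ)) = Tig A θ i ^ k) →
      ∃ g : ((Orb θ →₀ ℤ) →₀ KK) →ₗ[KK] Bth A θ,
        ∀ (μ : Orb θ →₀ ℤ) (c : KK),
          g (Finsupp.single μ c) = c • (μ.support.toList.map fun o => Tm o (μ o)).prod) ∧
    -- … and the triangular-decomposition (multiplication) map
    -- `U_q^-(g) ⊗ K[T] ⊗ U_q^+(g) → B_θ(g)` is bijective.
    (∀ (Fmap : Um A →ₐ[KK] Bth A θ) (Emap : Um A →ₐ[KK] Bth A θ)
        (Tm : Orb θ → ℤ → Bth A θ) (g : ((Orb θ →₀ ℤ) →₀ KK) →ₗ[KK] Bth A θ),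
      (∀ i, Fmap (fgen A i) = Fg A θ i) →
      (∀ i, Emap (fgen A i) = Eg A θ i) →
      (∀ (i : I) (k : ℕ), Tm (Quot.mk _ i) (k : ℤ) = Tg A θ i ^ k ∧
        Tm (Quot.mk _ i) (-(k : ℤ)) = Tig A θ i ^ k) →
      (∀ (μ : Orb θ →₀ ℤ) (c : KK),
        g (Finsupp.single μ c) = c • (μ.support.toList.map fun o => Tm o (μ o)).prod) →
      Function.Bijective
        ((LinearMap.mul' KK (Bth A θ)).comp
          (TensorProduct.map Fmap.toLinearMap
            ((LinearMap.mul' KK (Bth A θ)).comp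
              (TensorProduct.map g Emap.toLinearMap))))) := by
  refine ⟨⟨Bth.homF A θ, Bth.homF_fgen A θ⟩, ⟨Bth.homE A θ, Bth.homE_fgen A θ⟩,
    ⟨fun o n => ↑(Bth.orbT A θ o ^ n), Bth.orbT_zpow A θ⟩,
    fun Tm hTm => ⟨Bth.torusMap A θ, fun μ c => ?_⟩,
    fun Fmap Emap Tm g hF hE hTm hg => ?_⟩
  · simp only [Bth.torusMap_single, Bth.eq_orbT_zpow hTm]
  · obtain rfl : Fmap = Bth.homF A θ :=
      Um.algHom_ext fun i => (hF i).trans (Bth.homF_fgen A θ i).symm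
    obtain rfl : Emap = Bth.homE A θ :=
      Um.algHom_ext fun i => (hE i).trans (Bth.homE_fgen A θ i).symm
    obtain rfl : g = Bth.torusMap A θ := Finsupp.lhom_ext fun μ c => by
      simp only [hg, Bth.torusMap_single, Bth.eq_orbT_zpow hTm]
    exact Bth.triangularMap_bijective hA hθ
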